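/- Let a ∈ ℝ² and let r : ℝ → ℝ² be twice differentiable with r''(t) = r(t) − a for all t ≥ 0. If a ≠ r(0) + r'(0) (i.e., the ankle is not placed at the instantaneous capture point), then ‖r(t)‖ → ∞ as t → ∞; in particular the robot is not captured. -/

import Mathlib

/-!
In the deviation `r - a` the dynamics split into two scalar modes: `r + r' - a` grows like `exp t`
and `r - r' - a` decays like `exp (-t)`. Half the sum of the two modes recovers `r - a`, so
`exp (-t) • r t` converges to half the initial offset of the capture point from the ankle. When
that offset is nonzero, `‖r t‖` grows exponentially.
-/

section

open Filter Set Topology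

theorem tendsto_norm_smul_atTop {α 𝕜 E : Type*} [NormedField 𝕜] [NormedAddCommGroup E]
    [NormedSpace 𝕜 E] {l : Filter α} {f : α → 𝕜} {g : α → E} {c : E}
    (hf : Tendsto (fun x => ‖f x‖) l atTop) (hg : Tendsto g l (𝓝 c)) (hc : c ≠ 0) :
    Tendsto (fun x => ‖f x • g x‖) l atTop := by
  simpa only [norm_smul] using hf.atTop_mul_pos (norm_pos_iff.2 hc) hg.norm

variable {E : Type*} [NormedAddCommGroup E] [NormedSpace ℝ E]

theorem eq_exp_smul_of_hasDerivWithinAt {f : ℝ → E} {c t₀ : ℝ}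
    (hf : ∀ t ∈ Ici t₀, HasDerivWithinAt f (c • f t) (Ici t₀) t) {t : ℝ} (ht : t₀ ≤ t) :
    f t = Real.exp (c * (t - t₀)) • f t₀ := by
  let g : ℝ → E := fun x => Real.exp (-(c * (x - t₀))) • f x
  have hg : ∀ x ∈ Ici t₀, HasDerivWithinAt g 0 (Ici t₀) x := fun x hx => by
    have hexp : HasDerivAt (fun y => Real.exp (-(c * (y - t₀))))
        (Real.exp (-(c * (x - t₀))) * -(c * 1)) x :=
      (((hasDerivAt_id x).sub_const t₀).const_mul c).neg.exp
    exact (hexp.hasDerivWithinAt.smul (hf x hx)).congr_deriv (by module)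
  have hconst : g t = g t₀ :=
    constant_of_has_deriv_right_zero
      (fun x hx => (hg x hx.1).continuousWithinAt.mono Icc_subset_Ici_self)
      (fun x hx => (hg x hx.1).mono (Ici_subset_Ici.2 hx.1)) t ⟨ht, le_rfl⟩
  calc
    f t = Real.exp (c * (t - t₀)) • g t := by
      rw [smul_smul, ← Real.exp_add, add_neg_cancel, Real.exp_zero, one_smul]
    _ = Real.exp (c * (t - t₀)) • f t₀ := by simp [hconst, g]

/-- The instantaneous capture point of the normalized linear inverted pendulum with center of
mass position `x` and velocity `v`: the ankle location from which this state is captured. -/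
def capturePoint (x v : E) : E := x + v

/-- `r` is the center of mass trajectory, with velocity `v`, of the normalized linear inverted
pendulum `r'' = r - a` with ankle `a` from time `t₀` on. The second-order equation is encoded as a
first-order system for `(r, v)`, with one-sided derivatives at `t₀`. -/
structure IsLIPMTrajectory (a : E) (t₀ : ℝ) (r v : ℝ → E) : Prop where
  hasDerivWithinAt_position : ∀ t ∈ Ici t₀, HasDerivWithinAt r (v t) (Ici t₀) t
  hasDerivWithinAt_velocity : ∀ t ∈ Ici t₀, HasDerivWithinAt v (r t - a) (Ici t₀) t

namespace IsLIPMTrajectory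

variable {a : E} {t₀ t : ℝ} {r v : ℝ → E}

theorem capturePoint_sub_ankle (h : IsLIPMTrajectory a t₀ r v) (ht : t₀ ≤ t) :
    capturePoint (r t) (v t) - a = Real.exp (t - t₀) • (capturePoint (r t₀) (v t₀) - a) := by
  have hderiv : ∀ x ∈ Ici t₀, HasDerivWithinAt (fun y => capturePoint (r y) (v y) - a)
      ((1 : ℝ) • (capturePoint (r x) (v x) - a)) (Ici t₀) x := fun x hx =>
    (((h.hasDerivWithinAt_position x hx).add (h.hasDerivWithinAt_velocity x hx)).sub_const
      a).congr_deriv (by unfold capturePoint; module)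
  simpa only [one_mul] using eq_exp_smul_of_hasDerivWithinAt hderiv ht

theorem position_sub_velocity_sub_ankle (h : IsLIPMTrajectory a t₀ r v) (ht : t₀ ≤ t) :
    r t - v t - a = Real.exp (-(t - t₀)) • (r t₀ - v t₀ - a) := by
  have hderiv : ∀ x ∈ Ici t₀, HasDerivWithinAt (fun y => r y - v y - a)
      ((-1 : ℝ) • (r x - v x - a)) (Ici t₀) x := fun x hx =>
    (((h.hasDerivWithinAt_position x hx).sub (h.hasDerivWithinAt_velocity x hx)).sub_const
      a).congr_deriv (by module)
  simpa only [neg_one_mul] using eq_exp_smul_of_hasDerivWithinAt hderiv ht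

theorem position_eq (h : IsLIPMTrajectory a t₀ r v) (ht : t₀ ≤ t) :
    r t = a + (1 / 2 : ℝ) • (Real.exp (t - t₀) • (capturePoint (r t₀) (v t₀) - a) +
      Real.exp (-(t - t₀)) • (r t₀ - v t₀ - a)) := by
  rw [← h.capturePoint_sub_ankle ht, ← h.position_sub_velocity_sub_ankle ht, capturePoint]
  module

theorem tendsto_exp_neg_smul_position (h : IsLIPMTrajectory a t₀ r v) :
    Tendsto (fun t => Real.exp (-(t - t₀)) • r t) atTop
      (𝓝 ((1 / 2 : ℝ) • (capturePoint (r t₀) (v t₀) - a))) := by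
  set c := capturePoint (r t₀) (v t₀) - a
  set d := r t₀ - v t₀ - a
  have hdecay : Tendsto (fun t => Real.exp (-(t - t₀))) atTop (𝓝 0) :=
    Real.tendsto_exp_neg_atTop_nhds_zero.comp (tendsto_atTop_add_const_right _ (-t₀) tendsto_id)
  have hlim : Tendsto (fun t => Real.exp (-(t - t₀)) • a +
      (1 / 2 : ℝ) • (c + (Real.exp (-(t - t₀)) * Real.exp (-(t - t₀))) • d)) atTop
      (𝓝 ((1 / 2 : ℝ) • c)) := by
    simpa only [zero_smul, mul_zero, zero_add, add_zero] using (hdecay.smul_const a).add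
      ((((hdecay.mul hdecay).smul_const d).const_add c).const_smul (1 / 2 : ℝ))
  refine hlim.congr' ?_
  filter_upwards [eventually_ge_atTop t₀] with t ht
  have hexp : Real.exp (-(t - t₀)) * Real.exp (t - t₀) = 1 := by
    rw [← Real.exp_add, neg_add_cancel, Real.exp_zero]
  calc
    _ = Real.exp (-(t - t₀)) • a + (1 / 2 : ℝ) • ((Real.exp (-(t - t₀)) * Real.exp (t - t₀)) • c +
        (Real.exp (-(t - t₀)) * Real.exp (-(t - t₀))) • d) := by rw [hexp, one_smul]
    _ = Real.exp (-(t - t₀)) • r t := by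
      rw [h.position_eq ht]
      module

end IsLIPMTrajectory

theorem stmt5_general {a : E} {t₀ : ℝ} {r v : ℝ → E} (h : IsLIPMTrajectory a t₀ r v)
    (hne : a ≠ capturePoint (r t₀) (v t₀)) : Tendsto (fun t => ‖r t‖) atTop atTop := by
  have hexp : Tendsto (fun t => Real.exp (t - t₀)) atTop atTop :=
    Real.tendsto_exp_atTop.comp (tendsto_atTop_add_const_right _ (-t₀) tendsto_id)
  have hoffset : (1 / 2 : ℝ) • (capturePoint (r t₀) (v t₀) - a) ≠ 0 :=
    smul_ne_zero (by norm_num) (sub_ne_zero.2 hne.symm)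
  refine (tendsto_norm_smul_atTop (tendsto_norm_atTop_atTop.comp hexp)
    h.tendsto_exp_neg_smul_position hoffset).congr fun t => ?_
  rw [smul_smul, ← Real.exp_add, add_neg_cancel, Real.exp_zero, one_smul]

end

/-- If the ankle is NOT placed at the instantaneous capture point
(`a ≠ r 0 + r' 0`), then under the LIPM dynamics `r'' = r - a` on `t ≥ 0`,
the center of mass diverges: `‖r t‖ → ∞` as `t → ∞`; in particular the
robot is not captured. -/
theorem stmt5 (a : EuclideanSpace ℝ (Fin 2)) (r : ℝ → EuclideanSpace ℝ (Fin 2))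
    (hr : Differentiable ℝ r) (hr' : Differentiable ℝ (deriv r))
    (hode : ∀ t, 0 ≤ t → deriv (deriv r) t = r t - a)
    (hne : a ≠ r 0 + deriv r 0) :
    Filter.Tendsto (fun t => ‖r t‖) Filter.atTop Filter.atTop :=
  stmt5_general ⟨fun t _ => (hr t).hasDerivAt.hasDerivWithinAt,
    fun t ht => hode t ht ▸ (hr' t).hasDerivAt.hasDerivWithinAt⟩ hne
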